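/- arXiv:2602.12671 — 2 statements merged into one kernel-verified Lean document; each statement's English description precedes it below -/
import Mathlib

section
/- Let (M, Δ_⋄, Δ_•, α_M) be a comodule over a multiplicative post-Hom-Lie coalgebra (L, γ, Δ, α) over a field of characteristic 0. For any natural number k define Δ_⋄⁽⁰ᐟᵏ⁾ = Δ_⋄∘α_M^{2^k−1} : M → L⊗M and Δ_•⁽⁰ᐟᵏ⁾ = Δ_•∘α_M^{2^k−1} : M → L⊗M. Then (M, Δ_⋄⁽⁰ᐟᵏ⁾, Δ_•⁽⁰ᐟᵏ⁾, α_M^{2^k}) is a comodule over the twisted post-Hom-Lie coalgebra (L, γ∘α^{2^k−1}, Δ∘α^{2^k−1}, α^{2^k}). -/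
open TensorProduct

noncomputable section

variable {F : Type*} [Field F] [CharZero F]
variable {C : Type*} [AddCommGroup C] [Module F C]

/-- The flip `τ : x ⊗ y ↦ y ⊗ x` on `C ⊗ C`. -/
def tw : C ⊗[F] C →ₗ[F] C ⊗[F] C := (TensorProduct.comm F C C).toLinearMap

/-- `(f ⊗ g)` (followed by the associator), for `f : C → C ⊗ C`, `g : C → C`. -/
def rT (f : C →ₗ[F] C ⊗[F] C) (g : C →ₗ[F] C) :
    C ⊗[F] C →ₗ[F] C ⊗[F] (C ⊗[F] C) :=
  (TensorProduct.assoc F C C C).toLinearMap ∘ₗ TensorProduct.map f g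

/-- `(g ⊗ f)` for `g : C → C`, `f : C → C ⊗ C`. -/
def lT (g : C →ₗ[F] C) (f : C →ₗ[F] C ⊗[F] C) :
    C ⊗[F] C →ₗ[F] C ⊗[F] (C ⊗[F] C) :=
  TensorProduct.map g f

/-- `τ ⊗ I` acting on `C ⊗ (C ⊗ C)` (swap of the first two factors). -/
def sw12 : C ⊗[F] (C ⊗[F] C) →ₗ[F] C ⊗[F] (C ⊗[F] C) :=
  (TensorProduct.assoc F C C C).toLinearMap ∘ₗ
    TensorProduct.map (tw : C ⊗[F] C →ₗ[F] C ⊗[F] C) (LinearMap.id : C →ₗ[F] C) ∘ₗ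
    (TensorProduct.assoc F C C C).symm.toLinearMap

/-- The cyclic permutation `ξ : x ⊗ y ⊗ z ↦ y ⊗ z ⊗ x` on `C ⊗ (C ⊗ C)`. -/
def cyc : C ⊗[F] (C ⊗[F] C) →ₗ[F] C ⊗[F] (C ⊗[F] C) :=
  TensorProduct.map (LinearMap.id : C →ₗ[F] C) (tw : C ⊗[F] C →ₗ[F] C ⊗[F] C) ∘ₗ sw12

/-- Hom-Lie coalgebra axioms for `(C, γ, α)`: skew-cocommutativity,
comultiplicativity, and the Hom-co-Jacobi identity. -/
def IsHomLieCoalgebra (γ : C →ₗ[F] C ⊗[F] C) (α : C →ₗ[F] C) : Prop :=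
  (γ = -(tw ∘ₗ γ)) ∧
  (γ ∘ₗ α = TensorProduct.map α α ∘ₗ γ) ∧
  ((LinearMap.id + cyc + cyc ∘ₗ cyc) ∘ₗ (lT α γ ∘ₗ γ) = 0)

/-- Post-Hom-Lie coalgebra axioms for `(C, γ, Δ, α)`. -/
def IsPostHomLieCoalgebra (γ Δ : C →ₗ[F] C ⊗[F] C) (α : C →ₗ[F] C) : Prop :=
  IsHomLieCoalgebra γ α ∧
  (lT α γ ∘ₗ Δ - rT Δ α ∘ₗ γ - sw12 ∘ₗ (lT α Δ ∘ₗ γ) = 0) ∧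
  (rT Δ α ∘ₗ Δ - lT α Δ ∘ₗ Δ - sw12 ∘ₗ (rT Δ α ∘ₗ Δ) +
    sw12 ∘ₗ (lT α Δ ∘ₗ Δ) + rT γ α ∘ₗ Δ = 0)

variable {M : Type*} [AddCommGroup M] [Module F M]

/-- `(f ⊗ g)` (followed by the associator) for `f : C → C ⊗ C`, `g : M → M`. -/
def rTM (f : C →ₗ[F] C ⊗[F] C) (g : M →ₗ[F] M) :
    C ⊗[F] M →ₗ[F] C ⊗[F] (C ⊗[F] M) :=
  (TensorProduct.assoc F C C M).toLinearMap ∘ₗ TensorProduct.map f g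

/-- `(g ⊗ f)` for `g : C → C`, `f : M → C ⊗ M`. -/
def lTM (g : C →ₗ[F] C) (f : M →ₗ[F] C ⊗[F] M) :
    C ⊗[F] M →ₗ[F] C ⊗[F] (C ⊗[F] M) :=
  TensorProduct.map g f

/-- `τ ⊗ Id_M` acting on `C ⊗ (C ⊗ M)` (swap of the two `C`-factors). -/
def sw12M : C ⊗[F] (C ⊗[F] M) →ₗ[F] C ⊗[F] (C ⊗[F] M) :=
  (TensorProduct.assoc F C C M).toLinearMap ∘ₗ
    TensorProduct.map (tw : C ⊗[F] C →ₗ[F] C ⊗[F] C) (LinearMap.id : M →ₗ[F] M) ∘ₗ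
    (TensorProduct.assoc F C C M).symm.toLinearMap

/-- Comodule axioms over a post-Hom-Lie coalgebra `(C, γ, Δ, α)`, with structure
maps `Dd = Δ_⋄` and `Db = Δ_•`. -/
def IsPostHomLieComodule (γ Δ : C →ₗ[F] C ⊗[F] C) (α : C →ₗ[F] C)
    (Dd Db : M →ₗ[F] C ⊗[F] M) (αM : M →ₗ[F] M) : Prop :=
  (Dd ∘ₗ αM = TensorProduct.map α αM ∘ₗ Dd) ∧
  (Db ∘ₗ αM = TensorProduct.map α αM ∘ₗ Db) ∧
  (rTM γ αM ∘ₗ Dd = lTM α Dd ∘ₗ Dd - sw12M ∘ₗ (lTM α Dd ∘ₗ Dd)) ∧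
  (rTM Δ αM ∘ₗ Dd = lTM α Dd ∘ₗ Db - sw12M ∘ₗ (lTM α Db ∘ₗ Db)) ∧
  (rTM γ αM ∘ₗ Db =
    (lTM α Db ∘ₗ Db - sw12M ∘ₗ (lTM α Db ∘ₗ Db)) +
    (sw12M ∘ₗ (rTM Δ αM ∘ₗ Db) - rTM Δ αM ∘ₗ Db))

/-!
If `(β, βM)` intertwines both coactions and `βM` commutes with `αM`, then every term of a comodule
axiom for the twisted structure is the corresponding term of the original axiom precomposed with
`βM ∘ βM`: one copy of `βM` twists the coaction applied first, and the other arises because the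
factor `β ⊗ βM` split off the second map passes through that coaction. The pair `(α ^ n, αM ^ n)`
satisfies these conditions.
-/

section Intertwining

variable {R L N : Type*} [CommSemiring R] [AddCommMonoid L] [Module R L] [AddCommMonoid N]
  [Module R N] {D : N →ₗ[R] L ⊗[R] N} {α β : L →ₗ[R] L} {αM βM : N →ₗ[R] N}

theorem comp_pow_eq_map_pow_comp (hD : D ∘ₗ αM = TensorProduct.map α αM ∘ₗ D) (n : ℕ) :
    D ∘ₗ αM ^ n = TensorProduct.map (α ^ n) (αM ^ n) ∘ₗ D := by
  rw [← TensorProduct.map_pow]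
  exact (Module.End.commute_pow_left_of_commute hD.symm n).symm

theorem comp_comp_eq_map_comp_comp (hα : D ∘ₗ αM = TensorProduct.map α αM ∘ₗ D)
    (hβ : D ∘ₗ βM = TensorProduct.map β βM ∘ₗ D) :
    D ∘ₗ (αM ∘ₗ βM) = TensorProduct.map (α ∘ₗ β) (αM ∘ₗ βM) ∘ₗ D := by
  rw [TensorProduct.map_comp, LinearMap.comp_assoc, ← hβ, ← LinearMap.comp_assoc, hα,
    LinearMap.comp_assoc]

theorem twist_comp_eq_map_comp_twist (hα : D ∘ₗ αM = TensorProduct.map α αM ∘ₗ D)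
    (hβ : D ∘ₗ βM = TensorProduct.map β βM ∘ₗ D) (hcomm : Commute αM βM) :
    (D ∘ₗ βM) ∘ₗ (αM ∘ₗ βM) = TensorProduct.map (α ∘ₗ β) (αM ∘ₗ βM) ∘ₗ (D ∘ₗ βM) := by
  have hβαβ : βM ∘ₗ (αM ∘ₗ βM) = (αM ∘ₗ βM) ∘ₗ βM :=
    (hcomm.symm.mul_right (Commute.refl βM)).eq
  rw [LinearMap.comp_assoc, hβαβ, ← LinearMap.comp_assoc, comp_comp_eq_map_comp_comp hα hβ,
    LinearMap.comp_assoc]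

end Intertwining

section Twist

variable {K L N : Type*} [Field K] [AddCommGroup L] [Module K L] [AddCommGroup N] [Module K N]

theorem rTM_comp_comp (f : L →ₗ[K] L ⊗[K] L) (g βM : N →ₗ[K] N) (β : L →ₗ[K] L) :
    rTM (f ∘ₗ β) (g ∘ₗ βM) = rTM f g ∘ₗ TensorProduct.map β βM := by
  rw [rTM, rTM, TensorProduct.map_comp, LinearMap.comp_assoc]

theorem lTM_comp_comp (g β : L →ₗ[K] L) (D : N →ₗ[K] L ⊗[K] N) (βM : N →ₗ[K] N) :
    lTM (g ∘ₗ β) (D ∘ₗ βM) = lTM g D ∘ₗ TensorProduct.map β βM :=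
  TensorProduct.map_comp g D β βM

variable {β : L →ₗ[K] L} {D : N →ₗ[K] L ⊗[K] N} {βM : N →ₗ[K] N}

theorem rTM_twist_comp_twist (hD : D ∘ₗ βM = TensorProduct.map β βM ∘ₗ D)
    (f : L →ₗ[K] L ⊗[K] L) (g : N →ₗ[K] N) :
    rTM (f ∘ₗ β) (g ∘ₗ βM) ∘ₗ (D ∘ₗ βM) = (rTM f g ∘ₗ D) ∘ₗ (βM ∘ₗ βM) := by
  calc rTM (f ∘ₗ β) (g ∘ₗ βM) ∘ₗ (D ∘ₗ βM)
      = rTM f g ∘ₗ (TensorProduct.map β βM ∘ₗ D) ∘ₗ βM := by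
        simp only [rTM_comp_comp, LinearMap.comp_assoc]
    _ = (rTM f g ∘ₗ D) ∘ₗ (βM ∘ₗ βM) := by
        simp only [← hD, LinearMap.comp_assoc]

theorem lTM_twist_comp_twist (hD : D ∘ₗ βM = TensorProduct.map β βM ∘ₗ D)
    (g : L →ₗ[K] L) (E : N →ₗ[K] L ⊗[K] N) :
    lTM (g ∘ₗ β) (E ∘ₗ βM) ∘ₗ (D ∘ₗ βM) = (lTM g E ∘ₗ D) ∘ₗ (βM ∘ₗ βM) := by
  calc lTM (g ∘ₗ β) (E ∘ₗ βM) ∘ₗ (D ∘ₗ βM)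
      = lTM g E ∘ₗ (TensorProduct.map β βM ∘ₗ D) ∘ₗ βM := by
        simp only [lTM_comp_comp, LinearMap.comp_assoc]
    _ = (lTM g E ∘ₗ D) ∘ₗ (βM ∘ₗ βM) := by
        simp only [← hD, LinearMap.comp_assoc]

theorem IsPostHomLieComodule.twist {γ Δ : L →ₗ[K] L ⊗[K] L} {α : L →ₗ[K] L}
    {Dd Db : N →ₗ[K] L ⊗[K] N} {αM : N →ₗ[K] N} (hM : IsPostHomLieComodule γ Δ α Dd Db αM)
    (hDd : Dd ∘ₗ βM = TensorProduct.map β βM ∘ₗ Dd)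
    (hDb : Db ∘ₗ βM = TensorProduct.map β βM ∘ₗ Db) (hcomm : Commute αM βM) :
    IsPostHomLieComodule (γ ∘ₗ β) (Δ ∘ₗ β) (α ∘ₗ β) (Dd ∘ₗ βM) (Db ∘ₗ βM) (αM ∘ₗ βM) := by
  obtain ⟨hDdα, hDbα, hγDd, hΔDd, hγDb⟩ := hM
  refine ⟨twist_comp_eq_map_comp_twist hDdα hDd hcomm,
    twist_comp_eq_map_comp_twist hDbα hDb hcomm, ?_, ?_, ?_⟩
  · simp only [rTM_twist_comp_twist hDd, lTM_twist_comp_twist hDd, hγDd,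
      LinearMap.sub_comp, LinearMap.comp_assoc]
  · simp only [rTM_twist_comp_twist hDd, lTM_twist_comp_twist hDb, hΔDd,
      LinearMap.sub_comp, LinearMap.comp_assoc]
  · simp only [rTM_twist_comp_twist hDb, lTM_twist_comp_twist hDb, hγDb,
      LinearMap.add_comp, LinearMap.sub_comp, LinearMap.comp_assoc]

theorem postHomLieComodule_twist_exp_general {γ Δ : L →ₗ[K] L ⊗[K] L} {α : L →ₗ[K] L}
    {Dd Db : N →ₗ[K] L ⊗[K] N} {αM : N →ₗ[K] N} (hM : IsPostHomLieComodule γ Δ α Dd Db αM)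
    (n : ℕ) :
    IsPostHomLieComodule (γ ∘ₗ α ^ n) (Δ ∘ₗ α ^ n) (α ^ (n + 1))
      (Dd ∘ₗ αM ^ n) (Db ∘ₗ αM ^ n) (αM ^ (n + 1)) := by
  rw [pow_succ' α, pow_succ' αM]
  exact hM.twist (comp_pow_eq_map_pow_comp hM.1 n) (comp_pow_eq_map_pow_comp hM.2.1 n)
    (Commute.self_pow αM n)

end Twist

/-- Twisting a comodule over a multiplicative post-Hom-Lie coalgebra by
`α_M^(2^k - 1)` yields a comodule over the twisted post-Hom-Lie coalgebra
`(L, γ ∘ α^(2^k-1), Δ ∘ α^(2^k-1), α^(2^k))`. -/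
theorem postHomLieComodule_twist_exp
    (γ Δ : C →ₗ[F] C ⊗[F] C) (α : C →ₗ[F] C)
    (Dd Db : M →ₗ[F] C ⊗[F] M) (αM : M →ₗ[F] M)
    (h : IsPostHomLieCoalgebra γ Δ α)
    (hmult : Δ ∘ₗ α = TensorProduct.map α α ∘ₗ Δ)
    (hM : IsPostHomLieComodule γ Δ α Dd Db αM) (k : ℕ) :
    IsPostHomLieComodule (γ ∘ₗ α ^ (2 ^ k - 1)) (Δ ∘ₗ α ^ (2 ^ k - 1)) (α ^ (2 ^ k))
      (Dd ∘ₗ αM ^ (2 ^ k - 1)) (Db ∘ₗ αM ^ (2 ^ k - 1)) (αM ^ (2 ^ k)) := by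
  simpa only [Nat.sub_add_cancel Nat.one_le_two_pow] using
    postHomLieComodule_twist_exp_general hM (2 ^ k - 1)
end
end

section
/- Let (M, Δ_⋄, Δ_•, α_M) be a comodule over a post-Hom-Lie coalgebra (L, γ, Δ, α) over a field of characteristic 0. Let β : L → L be an endomorphism of the post-Hom-Lie coalgebra (so β∘α = α∘β, γ∘β = (β⊗β)∘γ, Δ∘β = (β⊗β)∘Δ) and let β_M : M → M be a linear map with α_M∘β_M = β_M∘α_M, Δ_⋄∘β_M = (β⊗β_M)∘Δ_⋄ and Δ_•∘β_M = (β⊗β_M)∘Δ_•. Define Δ̃_⋄ = (β⊗Id_M)∘Δ_⋄∘β_M and Δ̃_• = (β⊗Id_M)∘Δ_•∘β_M. Then (M, Δ̃_⋄, Δ̃_•, α_M∘β_M) is a comodule over the twisted post-Hom-Lie coalgebra (L, γ∘β, Δ∘β, β∘α). -/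
open TensorProduct

noncomputable section

variable {F : Type*} [Field F] [CharZero F]
variable {C : Type*} [AddCommGroup C] [Module F C]

variable {M : Type*} [AddCommGroup M] [Module F M]

/-!
The passage from `(Δ_⋄, Δ_•)` to `((β ⊗ Id) ∘ Δ_⋄ ∘ β_M, (β ⊗ Id) ∘ Δ_• ∘ β_M)` is the composite of
two constructions. The Yau twist by `(β, β_M)` replaces a coaction `D` by `D ∘ β_M`; every
quadratic axiom for the twisted coactions is the original one precomposed with `β_M ∘ β_M`.
Corestriction along a morphism `φ` of coalgebras replaces `D` by `(φ ⊗ Id) ∘ D`; every quadratic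
axiom is then the original one postcomposed with `φ ⊗ φ ⊗ Id`. Finally `β` is an endomorphism of the
twisted coalgebra, so one may twist by `(β, β_M)` and then corestrict along `β`.
-/

section Intertwining

variable {R : Type*} [CommSemiring R] {N N' P : Type*}
  [AddCommMonoid N] [AddCommMonoid N'] [AddCommMonoid P] [Module R N] [Module R N'] [Module R P]
  {α : N →ₗ[R] N} {αP : P →ₗ[R] P} {D : P →ₗ[R] N ⊗[R] P}

theorem twist_comp_of_comm {β : N →ₗ[R] N} {βP : P →ₗ[R] P}
    (hα : D ∘ₗ αP = TensorProduct.map α αP ∘ₗ D)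
    (hβα : β ∘ₗ α = α ∘ₗ β) (hβP : αP ∘ₗ βP = βP ∘ₗ αP)
    (hβ : D ∘ₗ βP = TensorProduct.map β βP ∘ₗ D) :
    (D ∘ₗ βP) ∘ₗ (αP ∘ₗ βP) = TensorProduct.map (β ∘ₗ α) (αP ∘ₗ βP) ∘ₗ (D ∘ₗ βP) := by
  calc (D ∘ₗ βP) ∘ₗ (αP ∘ₗ βP)
      = (D ∘ₗ αP) ∘ₗ (βP ∘ₗ βP) := by
        rw [← LinearMap.comp_assoc, LinearMap.comp_assoc αP βP D, ← hβP]
        simp only [LinearMap.comp_assoc]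
    _ = TensorProduct.map α αP ∘ₗ (TensorProduct.map β βP ∘ₗ D) ∘ₗ βP := by
        rw [hα, ← hβ, LinearMap.comp_assoc, LinearMap.comp_assoc]
    _ = TensorProduct.map (β ∘ₗ α) (αP ∘ₗ βP) ∘ₗ (D ∘ₗ βP) := by
        rw [hβα, TensorProduct.map_comp, LinearMap.comp_assoc, LinearMap.comp_assoc]

theorem corestrict_comp_of_comm {α' : N' →ₗ[R] N'} {φ : N →ₗ[R] N'}
    (hα : D ∘ₗ αP = TensorProduct.map α αP ∘ₗ D) (hφα : α' ∘ₗ φ = φ ∘ₗ α) :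
    (TensorProduct.map φ LinearMap.id ∘ₗ D) ∘ₗ αP =
      TensorProduct.map α' αP ∘ₗ TensorProduct.map φ LinearMap.id ∘ₗ D := by
  rw [LinearMap.comp_assoc, hα, ← LinearMap.comp_assoc, ← LinearMap.comp_assoc,
    ← TensorProduct.map_comp, ← TensorProduct.map_comp, hφα, LinearMap.id_comp, LinearMap.comp_id]

end Intertwining

section

variable {K : Type*} [Field K] {L : Type*} [AddCommGroup L] [Module K L]
variable {V : Type*} [AddCommGroup V] [Module K V]

section Naturality

variable {L' : Type*} [AddCommGroup L'] [Module K L']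
variable {V' : Type*} [AddCommGroup V'] [Module K V']
variable (φ : L →ₗ[K] L') (ψ : V →ₗ[K] V')

theorem sw12M_comp_map_map :
    sw12M ∘ₗ TensorProduct.map φ (TensorProduct.map φ ψ) =
      TensorProduct.map φ (TensorProduct.map φ ψ) ∘ₗ sw12M := by
  ext x y m
  simp [sw12M, tw]

variable {φ ψ}

theorem rTM_comp_map_of_comm {f : L →ₗ[K] L ⊗[K] L} {f' : L' →ₗ[K] L' ⊗[K] L'}
    {g : V →ₗ[K] V} {g' : V' →ₗ[K] V'}
    (hf : f' ∘ₗ φ = TensorProduct.map φ φ ∘ₗ f) (hg : g' ∘ₗ ψ = ψ ∘ₗ g) :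
    rTM f' g' ∘ₗ TensorProduct.map φ ψ =
      TensorProduct.map φ (TensorProduct.map φ ψ) ∘ₗ rTM f g := by
  rw [rTM, rTM, LinearMap.comp_assoc, ← TensorProduct.map_comp, hf, hg, TensorProduct.map_comp,
    ← LinearMap.comp_assoc, ← TensorProduct.map_map_comp_assoc_eq, LinearMap.comp_assoc]

theorem lTM_comp_map_of_comm {a : L →ₗ[K] L} {a' : L' →ₗ[K] L'}
    {D : V →ₗ[K] L ⊗[K] V} {D' : V' →ₗ[K] L' ⊗[K] V'}
    (ha : a' ∘ₗ φ = φ ∘ₗ a) (hD : D' ∘ₗ ψ = TensorProduct.map φ ψ ∘ₗ D) :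
    lTM a' D' ∘ₗ TensorProduct.map φ ψ =
      TensorProduct.map φ (TensorProduct.map φ ψ) ∘ₗ lTM a D := by
  rw [lTM, lTM, ← TensorProduct.map_comp, ha, hD, TensorProduct.map_comp]

end Naturality

section YauTwist

variable {β : L →ₗ[K] L} {βV : V →ₗ[K] V} {D E : V →ₗ[K] L ⊗[K] V}

theorem rTM_comp_twist (f : L →ₗ[K] L ⊗[K] L) (g : V →ₗ[K] V)
    (hE : E ∘ₗ βV = TensorProduct.map β βV ∘ₗ E) :
    rTM (f ∘ₗ β) (g ∘ₗ βV) ∘ₗ (E ∘ₗ βV) = (rTM f g ∘ₗ E) ∘ₗ (βV ∘ₗ βV) := by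
  calc rTM (f ∘ₗ β) (g ∘ₗ βV) ∘ₗ (E ∘ₗ βV)
      = rTM f g ∘ₗ (TensorProduct.map β βV ∘ₗ E) ∘ₗ βV := by
        simp only [rTM, TensorProduct.map_comp, LinearMap.comp_assoc]
    _ = (rTM f g ∘ₗ E) ∘ₗ (βV ∘ₗ βV) := by
        simp only [← hE, LinearMap.comp_assoc]

theorem lTM_comp_twist {α : L →ₗ[K] L} (hβα : β ∘ₗ α = α ∘ₗ β)
    (hE : E ∘ₗ βV = TensorProduct.map β βV ∘ₗ E) :
    lTM (β ∘ₗ α) (D ∘ₗ βV) ∘ₗ (E ∘ₗ βV) = (lTM α D ∘ₗ E) ∘ₗ (βV ∘ₗ βV) := by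
  calc lTM (β ∘ₗ α) (D ∘ₗ βV) ∘ₗ (E ∘ₗ βV)
      = lTM α D ∘ₗ (TensorProduct.map β βV ∘ₗ E) ∘ₗ βV := by
        simp only [lTM, hβα, TensorProduct.map_comp, LinearMap.comp_assoc]
    _ = (lTM α D ∘ₗ E) ∘ₗ (βV ∘ₗ βV) := by
        simp only [← hE, LinearMap.comp_assoc]

end YauTwist

section Corestriction

variable {L' : Type*} [AddCommGroup L'] [Module K L'] {φ : L →ₗ[K] L'}

theorem sw12M_comp_corestrict (X : V →ₗ[K] L ⊗[K] (L ⊗[K] V)) :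
    sw12M ∘ₗ TensorProduct.map φ (TensorProduct.map φ LinearMap.id) ∘ₗ X =
      TensorProduct.map φ (TensorProduct.map φ LinearMap.id) ∘ₗ sw12M ∘ₗ X := by
  rw [← LinearMap.comp_assoc, sw12M_comp_map_map, LinearMap.comp_assoc]

theorem rTM_comp_corestrict {f : L →ₗ[K] L ⊗[K] L} {f' : L' →ₗ[K] L' ⊗[K] L'}
    (hf : f' ∘ₗ φ = TensorProduct.map φ φ ∘ₗ f) (g : V →ₗ[K] V) (D : V →ₗ[K] L ⊗[K] V) :
    rTM f' g ∘ₗ TensorProduct.map φ LinearMap.id ∘ₗ D =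
      TensorProduct.map φ (TensorProduct.map φ LinearMap.id) ∘ₗ rTM f g ∘ₗ D := by
  rw [← LinearMap.comp_assoc, rTM_comp_map_of_comm hf (LinearMap.id_comp g).symm,
    LinearMap.comp_assoc]

theorem lTM_comp_corestrict {α : L →ₗ[K] L} {α' : L' →ₗ[K] L'} (hφα : α' ∘ₗ φ = φ ∘ₗ α)
    (D E : V →ₗ[K] L ⊗[K] V) :
    lTM α' (TensorProduct.map φ LinearMap.id ∘ₗ D) ∘ₗ TensorProduct.map φ LinearMap.id ∘ₗ E =
      TensorProduct.map φ (TensorProduct.map φ LinearMap.id) ∘ₗ lTM α D ∘ₗ E := by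
  rw [← LinearMap.comp_assoc, lTM_comp_map_of_comm hφα (LinearMap.comp_id _),
    LinearMap.comp_assoc]

end Corestriction

namespace IsPostHomLieComodule

variable {γ Δ : L →ₗ[K] L ⊗[K] L} {α : L →ₗ[K] L}
variable {Dd Db : V →ₗ[K] L ⊗[K] V} {αV : V →ₗ[K] V}

theorem twist_s19 {β : L →ₗ[K] L} {βV : V →ₗ[K] V}
    (hV : IsPostHomLieComodule γ Δ α Dd Db αV)
    (hβα : β ∘ₗ α = α ∘ₗ β) (hβV : αV ∘ₗ βV = βV ∘ₗ αV)
    (hβd : Dd ∘ₗ βV = TensorProduct.map β βV ∘ₗ Dd)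
    (hβb : Db ∘ₗ βV = TensorProduct.map β βV ∘ₗ Db) :
    IsPostHomLieComodule (γ ∘ₗ β) (Δ ∘ₗ β) (β ∘ₗ α) (Dd ∘ₗ βV) (Db ∘ₗ βV) (αV ∘ₗ βV) := by
  obtain ⟨hαd, hαb, hγd, hΔd, hγb⟩ := hV
  refine ⟨twist_comp_of_comm hαd hβα hβV hβd, twist_comp_of_comm hαb hβα hβV hβb, ?_, ?_, ?_⟩
  · rw [rTM_comp_twist γ αV hβd, lTM_comp_twist hβα hβd, hγd, LinearMap.sub_comp,
      LinearMap.comp_assoc _ _ sw12M]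
  · rw [rTM_comp_twist Δ αV hβd, lTM_comp_twist hβα hβb, lTM_comp_twist hβα hβb, hΔd,
      LinearMap.sub_comp, LinearMap.comp_assoc _ _ sw12M]
  · rw [rTM_comp_twist γ αV hβb, rTM_comp_twist Δ αV hβb, lTM_comp_twist hβα hβb, hγb]
    simp only [LinearMap.add_comp, LinearMap.sub_comp, LinearMap.comp_assoc]

theorem corestrict {L' : Type*} [AddCommGroup L'] [Module K L']
    {γ' Δ' : L' →ₗ[K] L' ⊗[K] L'} {α' : L' →ₗ[K] L'} {φ : L →ₗ[K] L'}
    (hV : IsPostHomLieComodule γ Δ α Dd Db αV)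
    (hφα : α' ∘ₗ φ = φ ∘ₗ α)
    (hφγ : γ' ∘ₗ φ = TensorProduct.map φ φ ∘ₗ γ)
    (hφΔ : Δ' ∘ₗ φ = TensorProduct.map φ φ ∘ₗ Δ) :
    IsPostHomLieComodule γ' Δ' α' (TensorProduct.map φ LinearMap.id ∘ₗ Dd)
      (TensorProduct.map φ LinearMap.id ∘ₗ Db) αV := by
  obtain ⟨hαd, hαb, hγd, hΔd, hγb⟩ := hV
  refine ⟨corestrict_comp_of_comm hαd hφα, corestrict_comp_of_comm hαb hφα, ?_, ?_, ?_⟩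
  · rw [rTM_comp_corestrict hφγ, lTM_comp_corestrict hφα, sw12M_comp_corestrict, hγd,
      LinearMap.comp_sub]
  · rw [rTM_comp_corestrict hφΔ, lTM_comp_corestrict hφα, lTM_comp_corestrict hφα,
      sw12M_comp_corestrict, hΔd, LinearMap.comp_sub]
  · rw [rTM_comp_corestrict hφγ, rTM_comp_corestrict hφΔ, lTM_comp_corestrict hφα,
      sw12M_comp_corestrict, sw12M_comp_corestrict, hγb, LinearMap.comp_add, LinearMap.comp_sub,
      LinearMap.comp_sub]

end IsPostHomLieComodule

theorem postHomLieComodule_twist_endo_general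
    {γ Δ : L →ₗ[K] L ⊗[K] L} {α β : L →ₗ[K] L}
    {Dd Db : V →ₗ[K] L ⊗[K] V} {αV βV : V →ₗ[K] V}
    (hβα : β ∘ₗ α = α ∘ₗ β)
    (hβγ : γ ∘ₗ β = TensorProduct.map β β ∘ₗ γ)
    (hβΔ : Δ ∘ₗ β = TensorProduct.map β β ∘ₗ Δ)
    (hV : IsPostHomLieComodule γ Δ α Dd Db αV)
    (hβV : αV ∘ₗ βV = βV ∘ₗ αV)
    (hβd : Dd ∘ₗ βV = TensorProduct.map β βV ∘ₗ Dd)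
    (hβb : Db ∘ₗ βV = TensorProduct.map β βV ∘ₗ Db) :
    IsPostHomLieComodule (γ ∘ₗ β) (Δ ∘ₗ β) (β ∘ₗ α)
      (TensorProduct.map β (LinearMap.id : V →ₗ[K] V) ∘ₗ Dd ∘ₗ βV)
      (TensorProduct.map β (LinearMap.id : V →ₗ[K] V) ∘ₗ Db ∘ₗ βV)
      (αV ∘ₗ βV) := by
  have twisted_comul {f : L →ₗ[K] L ⊗[K] L} (hf : f ∘ₗ β = TensorProduct.map β β ∘ₗ f) :
      (f ∘ₗ β) ∘ₗ β = TensorProduct.map β β ∘ₗ f ∘ₗ β := by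
    rw [← LinearMap.comp_assoc, ← hf]
  have twisted_alpha : (β ∘ₗ α) ∘ₗ β = β ∘ₗ β ∘ₗ α := by
    rw [LinearMap.comp_assoc, ← hβα]
  exact (hV.twist_s19 hβα hβV hβd hβb).corestrict twisted_alpha (twisted_comul hβγ)
    (twisted_comul hβΔ)

end

/-- Twisting a comodule over a post-Hom-Lie coalgebra by an endomorphism `β` of the
coalgebra and a compatible map `β_M` yields a comodule over the twisted
post-Hom-Lie coalgebra `(L, γ ∘ β, Δ ∘ β, β ∘ α)`. -/
theorem postHomLieComodule_twist_endo
    (γ Δ : C →ₗ[F] C ⊗[F] C) (α β : C →ₗ[F] C)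
    (Dd Db : M →ₗ[F] C ⊗[F] M) (αM βM : M →ₗ[F] M)
    (h : IsPostHomLieCoalgebra γ Δ α)
    (hβα : β ∘ₗ α = α ∘ₗ β)
    (hβγ : γ ∘ₗ β = TensorProduct.map β β ∘ₗ γ)
    (hβΔ : Δ ∘ₗ β = TensorProduct.map β β ∘ₗ Δ)
    (hM : IsPostHomLieComodule γ Δ α Dd Db αM)
    (hβM : αM ∘ₗ βM = βM ∘ₗ αM)
    (hβd : Dd ∘ₗ βM = TensorProduct.map β βM ∘ₗ Dd)
    (hβb : Db ∘ₗ βM = TensorProduct.map β βM ∘ₗ Db) :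
    IsPostHomLieComodule (γ ∘ₗ β) (Δ ∘ₗ β) (β ∘ₗ α)
      (TensorProduct.map β (LinearMap.id : M →ₗ[F] M) ∘ₗ Dd ∘ₗ βM)
      (TensorProduct.map β (LinearMap.id : M →ₗ[F] M) ∘ₗ Db ∘ₗ βM)
      (αM ∘ₗ βM) := by
  exact postHomLieComodule_twist_endo_general hβα hβγ hβΔ hM hβM hβd hβb
end
end
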